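/- For all NG families n₁ and n₂, the operation ◁▷ can be recovered from ▷ and the meet: n₁ ◁▷ n₂ = (n₂ ▷ n₁) ⊓ (n₁ ▷ n₂). -/

import Mathlib

/-- The support of an NG family: the set of names where it is defined. -/
def NGsupp {V : Type*} (n : V → Option (V × V × V)) : Set V :=
  {u | (n u).isSome}

open Classical in
/-- The left-biased join surrogate `n₁ ▷ n₂`. -/
noncomputable def NGtri {V : Type*} (n₁ n₂ : V → Option (V × V × V)) :
    V → Option (V × V × V) := fun u =>
  if u ∈ NGsupp n₁ then n₁ u
  else if u ∈ NGsupp n₂ \ NGsupp n₁ then n₂ u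
  else none

/-- The conflict set `n₁ ⚡ n₂`. -/
def NGconflict {V : Type*} (n₁ n₂ : V → Option (V × V × V)) : Set V :=
  {u | u ∈ NGsupp n₁ ∩ NGsupp n₂ ∧ n₁ u ≠ n₂ u}

open Classical in
/-- The symmetric join surrogate `n₁ ◁▷ n₂`. -/
noncomputable def NGbowtie {V : Type*} (n₁ n₂ : V → Option (V × V × V)) :
    V → Option (V × V × V) := fun u =>
  if u ∈ NGsupp n₁ \ NGconflict n₁ n₂ then n₁ u
  else if u ∈ NGsupp n₂ \ NGconflict n₁ n₂ then n₂ u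
  else none

open Classical in
/-- The binary meet `n₁ ⊓ n₂`. -/
noncomputable def NGmeet {V : Type*} (n₁ n₂ : V → Option (V × V × V)) :
    V → Option (V × V × V) := fun u =>
  if ∃ t, n₁ u = some t ∧ n₂ u = some t then n₁ u else none

/-- `◁▷` is recovered from `▷` and the meet:
`n₁ ◁▷ n₂ = (n₂ ▷ n₁) ⊓ (n₁ ▷ n₂)`. -/
theorem NGbowtie_eq_meet_tri {V : Type*} (n₁ n₂ : V → Option (V × V × V)) :
    NGbowtie n₁ n₂ = NGmeet (NGtri n₂ n₁) (NGtri n₁ n₂) := by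
  funext u
  rcases h₁ : n₁ u with _ | a <;> rcases h₂ : n₂ u with _ | b
  · simp [NGbowtie, NGmeet, NGtri, NGconflict, NGsupp, h₁, h₂]
  · simp [NGbowtie, NGmeet, NGtri, NGconflict, NGsupp, h₁, h₂]
  · simp [NGbowtie, NGmeet, NGtri, NGconflict, NGsupp, h₁, h₂]
  · by_cases hab : a = b
    · subst hab
      simp [NGbowtie, NGmeet, NGtri, NGconflict, NGsupp, h₁, h₂]
    · have hba : ¬ b = a := fun h => hab h.symm
      simp [NGbowtie, NGmeet, NGtri, NGconflict, NGsupp, h₁, h₂, hab, hba]
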